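/- Let Ω ⊆ ℂ be a bounded, simply connected open set that is symmetric in the following sense: 0 ∈ Ω, Ω is invariant under complex conjugation, and for every r > 0 the set ∂B(0,r) \ Ω is either empty or a connected closed set containing a point on the positive real axis. Let μ and M be the largest and smallest positive numbers, respectively, such that B(0,μ) ⊆ Ω ⊆ B(0,M). Let Φ : 𝔻 → Ω be a holomorphic bijection with Φ(0) = 0 and Φ'(0) > 0. Then Φ(conj(z)) = conj(Φ(z)) for all z ∈ 𝔻; Φ(z) is real if and only if z is real; Φ maps the interval (−1,0) onto (−M,0); and Φ maps the interval (0,1) onto (0,μ). -/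

import Mathlib

open Complex Metric Set

/-- A domain `Ω ⊆ ℂ` is symmetric: `0 ∈ Ω`, `Ω` is invariant under complex conjugation,
and for every `r > 0` the set `∂B(0,r) \ Ω` is either empty or a connected closed set
containing a point on the positive real axis. -/
def SymmetricDomain (Ω : Set ℂ) : Prop :=
  (0:ℂ) ∈ Ω ∧ (∀ z : ℂ, z ∈ Ω ↔ (starRingEnd ℂ) z ∈ Ω) ∧
  ∀ r : ℝ, 0 < r →
    (Metric.sphere (0:ℂ) r \ Ω = ∅ ∨
      (IsClosed (Metric.sphere (0:ℂ) r \ Ω) ∧ IsConnected (Metric.sphere (0:ℂ) r \ Ω) ∧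
        ∃ x : ℝ, 0 < x ∧ (x:ℂ) ∈ Metric.sphere (0:ℂ) r \ Ω))

/-!
The conjugate `z ↦ conj (Φ (conj z))` maps the disk into `Ω` with the same value and derivative at
`0` as `Φ`, so it equals `Φ` by the Schwarz lemma. Hence `Φ` restricts to an increasing bijection
from `(-1, 1)` onto `Ω ∩ ℝ`, which is therefore an interval. On each circle about `0` the complement
of `Ω` is a symmetric arc around the positive real axis, so with every point `Ω` contains all points
of the same modulus and smaller real part. Moving points to the negative axis shows that `Ω ∩ ℝ`
reaches down to `-M`; moving points of the positive axis around the circle shows that it stops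
at `μ`.
-/

open Filter Topology ComplexConjugate

section Inverse

theorem not_eventually_eq_const_of_injOn {X Y : Type*} [TopologicalSpace X] [T1Space X] {x : X}
    [(𝓝[≠] x).NeBot] {f : X → Y} {s : Set X} (hs : s ∈ 𝓝 x) (hf : InjOn f s) :
    ¬ ∀ᶠ y in 𝓝 x, f y = f x := by
  intro hconst
  have hsingleton : {x} ∈ 𝓝 x := by
    filter_upwards [hconst, hs] with y hy hys using hf hys (mem_of_mem_nhds hs) hy
  exact infinite_of_mem_nhds x hsingleton (finite_singleton x)

variable {U : Set ℂ} {f g : ℂ → ℂ} {z : ℂ}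

theorem nhds_le_map_nhds_of_injOn (hU : U ∈ 𝓝 z) (hf : DifferentiableOn ℂ f U)
    (hinj : InjOn f U) : 𝓝 (f z) ≤ map f (𝓝 z) :=
  (hf.analyticAt hU).eventually_constant_or_nhds_le_map_nhds.resolve_left
    (not_eventually_eq_const_of_injOn hU hinj)

theorem eventually_deriv_ne_zero_of_injOn (hU : U ∈ 𝓝 z) (hf : DifferentiableOn ℂ f U)
    (hinj : InjOn f U) : ∀ᶠ w in 𝓝[≠] z, deriv f w ≠ 0 := by
  have han : AnalyticAt ℂ f z := hf.analyticAt hU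
  refine han.deriv.eventually_eq_zero_or_eventually_ne_zero.resolve_left fun hzero => ?_
  refine not_eventually_eq_const_of_injOn hU hinj ?_
  obtain ⟨r, hr, hball⟩ := eventually_nhds_iff_ball.1 (hzero.and han.eventually_analyticAt)
  filter_upwards [ball_mem_nhds z hr] with w hw
  exact isOpen_ball.is_const_of_deriv_eq_zero (convex_ball z r).isPreconnected
    (fun x hx => (hball x hx).2.differentiableAt.differentiableWithinAt)
    (fun x hx => (hball x hx).1) hw (mem_ball_self hr)

theorem continuousAt_of_leftInvOn (hU : U ∈ 𝓝 z) (hf : DifferentiableOn ℂ f U)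
    (hg : LeftInvOn g f U) : ContinuousAt g (f z) := by
  have hgf : Tendsto (g ∘ f) (𝓝 z) (𝓝 z) :=
    tendsto_id.congr' (eventually_of_mem hU fun w hw => (hg hw).symm)
  rw [ContinuousAt, hg (mem_of_mem_nhds hU)]
  exact (tendsto_map'_iff.2 hgf).mono_left (nhds_le_map_nhds_of_injOn hU hf hg.injOn)

theorem eventually_rightInverse_of_leftInvOn (hU : U ∈ 𝓝 z) (hf : DifferentiableOn ℂ f U)
    (hg : LeftInvOn g f U) : ∀ᶠ y in 𝓝 (f z), f (g y) = y :=
  nhds_le_map_nhds_of_injOn hU hf hg.injOn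
    (eventually_map.2 (eventually_of_mem hU fun _ hw => congrArg f (hg hw)))

theorem hasDerivAt_of_leftInvOn (hU : U ∈ 𝓝 z) (hf : DifferentiableOn ℂ f U)
    (hg : LeftInvOn g f U) (hz : deriv f z ≠ 0) : HasDerivAt g (deriv f z)⁻¹ (f z) := by
  have hgz : g (f z) = z := hg (mem_of_mem_nhds hU)
  have hfz : HasDerivAt f (deriv f z) (g (f z)) :=
    hgz.symm ▸ (hf.differentiableAt hU).hasDerivAt
  exact hfz.of_local_left_inverse (continuousAt_of_leftInvOn hU hf hg) hz
    (eventually_rightInverse_of_leftInvOn hU hf hg)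

theorem differentiableAt_of_leftInvOn (hU : U ∈ 𝓝 z) (hf : DifferentiableOn ℂ f U)
    (hg : LeftInvOn g f U) : DifferentiableAt ℂ g (f z) := by
  -- The critical points of `f` are isolated, so their images are removable singularities of `g`.
  refine (analyticAt_of_differentiable_on_punctured_nhds_of_continuousAt ?_
    (continuousAt_of_leftInvOn hU hf hg)).differentiableAt
  refine eventually_nhdsWithin_iff.2 (nhds_le_map_nhds_of_injOn hU hf hg.injOn (mem_map.2 ?_))
  have hderiv := eventually_nhdsWithin_iff.1 (eventually_deriv_ne_zero_of_injOn hU hf hg.injOn)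
  filter_upwards [hderiv, eventually_mem_nhds_iff.2 hU] with w hw hwU hfw
  have hwz : w ≠ z := fun h => hfw (congrArg f h)
  exact (hasDerivAt_of_leftInvOn hwU hf hg (hw hwz)).differentiableAt

theorem deriv_ne_zero_of_injOn (hU : U ∈ 𝓝 z) (hf : DifferentiableOn ℂ f U) (hinj : InjOn f U) :
    deriv f z ≠ 0 := by
  intro hzero
  have hg : LeftInvOn (Function.invFunOn f U) f U := hinj.leftInvOn_invFunOn
  have hfz : HasDerivAt f 0 (Function.invFunOn f U (f z)) := by
    rw [hg (mem_of_mem_nhds hU), ← hzero]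
    exact (hf.differentiableAt hU).hasDerivAt
  exact not_differentiableAt_of_local_left_inverse_hasDerivAt_zero hfz
    (eventually_rightInverse_of_leftInvOn hU hf hg) (differentiableAt_of_leftInvOn hU hf hg)

end Inverse

section Schwarz

variable {c : ℂ} {r : ℝ} {f g : ℂ → ℂ}

theorem eqOn_id_of_mapsTo_ball_of_hasDerivAt_one (hf : DifferentiableOn ℂ f (ball c r))
    (hmaps : MapsTo f (ball c r) (ball c r)) (hfc : f c = c) (hderiv : HasDerivAt f 1 c) :
    EqOn f id (ball c r) := by
  intro z hz
  have hr : 0 < r := pos_of_mem_ball hz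
  have hdslope : dslope f c c = 1 := by rw [dslope_same, hderiv.deriv]
  have hmaps' : MapsTo f (ball c r) (closedBall (f c) r) :=
    hfc.symm ▸ hmaps.mono_right ball_subset_closedBall
  have haffine := affine_of_mapsTo_ball_of_norm_dslope_eq_div hf hmaps' (mem_ball_self hr)
    (by rw [hdslope, norm_one, div_self hr.ne'])
  simpa only [hdslope, hfc, smul_eq_mul, mul_one, add_sub_cancel, id_eq] using haffine hz

theorem eqOn_ball_of_mapsTo_image_of_deriv_eq (hf : DifferentiableOn ℂ f (ball c r))
    (hinj : InjOn f (ball c r)) (hg : DifferentiableOn ℂ g (ball c r))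
    (hmaps : MapsTo g (ball c r) (f '' ball c r)) (hgc : g c = f c)
    (hderiv : deriv g c = deriv f c) : EqOn g f (ball c r) := by
  intro z hz
  have hc : c ∈ ball c r := mem_ball_self (pos_of_mem_ball hz)
  have hnhds : ∀ w ∈ ball c r, ball c r ∈ 𝓝 w := fun w hw => isOpen_ball.mem_nhds hw
  have hne : deriv f c ≠ 0 := deriv_ne_zero_of_injOn (hnhds c hc) hf hinj
  set h := Function.invFunOn f (ball c r)
  have hleft : LeftInvOn h f (ball c r) := hinj.leftInvOn_invFunOn
  have hright : RightInvOn h f (f '' ball c r) := (surjOn_image f _).rightInvOn_invFunOn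
  have hh : DifferentiableOn ℂ h (f '' ball c r) := by
    rintro _ ⟨w, hw, rfl⟩
    exact (differentiableAt_of_leftInvOn (hnhds w hw) hf hleft).differentiableWithinAt
  have hcomp_deriv : HasDerivAt (h ∘ g) 1 c := by
    have hh' : HasDerivAt h (deriv f c)⁻¹ (g c) :=
      hgc ▸ hasDerivAt_of_leftInvOn (hnhds c hc) hf hleft hne
    have hg' : HasDerivAt g (deriv f c) c :=
      hderiv ▸ (hg.differentiableAt (hnhds c hc)).hasDerivAt
    simpa only [inv_mul_cancel₀ hne] using hh'.comp c hg'
  have hid : h (g z) = z :=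
    eqOn_id_of_mapsTo_ball_of_hasDerivAt_one (hh.comp hg hmaps)
      ((surjOn_image f _).mapsTo_invFunOn.comp hmaps)
      ((congrArg h hgc).trans (hleft hc)) hcomp_deriv hz
  exact (hright (hmaps hz)).symm.trans (congrArg f hid)

theorem map_conj_of_injOn_ball (hc : conj c = c) (hf : DifferentiableOn ℂ f (ball c r))
    (hinj : InjOn f (ball c r)) (himage : ∀ w ∈ f '' ball c r, conj w ∈ f '' ball c r)
    (hfc : conj (f c) = f c) (hderiv : conj (deriv f c) = deriv f c)
    {z : ℂ} (hz : z ∈ ball c r) : f (conj z) = conj (f z) := by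
  have hball : ∀ w ∈ ball c r, conj w ∈ ball c r := fun w hw => by
    rwa [mem_ball, ← hc, dist_conj_conj]
  have hdiff : DifferentiableOn ℂ (conj ∘ f ∘ conj) (ball c r) := fun w hw =>
    (differentiableAt_conj_conj_iff.2
      (hf.differentiableAt (isOpen_ball.mem_nhds (hball w hw)))).differentiableWithinAt
  have heq : EqOn (conj ∘ f ∘ conj) f (ball c r) :=
    eqOn_ball_of_mapsTo_image_of_deriv_eq hf hinj hdiff
      (fun w hw => himage _ (mem_image_of_mem f (hball w hw)))
      (by simp only [Function.comp_apply, hc, hfc])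
      (by simp only [deriv_conj_conj, Function.comp_apply, hc, hderiv])
  simpa using (heq (hball z hz)).symm

theorem im_eq_zero_iff_of_map_conj {U : Set ℂ} (hU : ∀ z ∈ U, conj z ∈ U) (hinj : InjOn f U)
    (hconj : ∀ z ∈ U, f (conj z) = conj (f z)) {z : ℂ} (hz : z ∈ U) :
    (f z).im = 0 ↔ z.im = 0 := by
  rw [← conj_eq_iff_im, ← conj_eq_iff_im, ← hconj z hz, hinj.eq_iff (hU z hz) hz]

end Schwarz

section RealTrace

/-- The restriction of `f : ℂ → ℂ` to the real axis as a real function. It takes real parts, so it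
agrees with `f` only where `f` is real-valued on the real axis. -/
def realTrace (f : ℂ → ℂ) (x : ℝ) : ℝ := (f x).re

variable {U : Set ℂ} {f : ℂ → ℂ}

theorem ofReal_realTrace {x : ℝ} (hx : (f x).im = 0) : (realTrace f x : ℂ) = f x :=
  Complex.ext rfl hx.symm

theorem image_image_ofReal {s : Set ℝ} (hs : ∀ x ∈ s, (f x).im = 0) :
    f '' (ofReal '' s) = ofReal '' (realTrace f '' s) := by
  simp only [image_image]
  exact image_congr fun x hx => (ofReal_realTrace (hs x hx)).symm

theorem continuousOn_realTrace (hf : ContinuousOn f U) :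
    ContinuousOn (realTrace f) (ofReal ⁻¹' U) :=
  continuous_re.comp_continuousOn
    (hf.comp continuous_ofReal.continuousOn (mapsTo_preimage _ _))

theorem deriv_realTrace {x : ℝ} (hf : DifferentiableAt ℂ f x) :
    deriv (realTrace f) x = (deriv f x).re :=
  hf.hasDerivAt.real_of_complex.deriv

theorem injOn_realTrace (hinj : InjOn f U) (hreal : ∀ z ∈ U, z.im = 0 → (f z).im = 0) :
    InjOn (realTrace f) (ofReal ⁻¹' U) := by
  intro x hx y hy hxy
  refine ofReal_injective (hinj hx hy ?_)
  rw [← ofReal_realTrace (hreal x hx (ofReal_im x)), hxy,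
    ofReal_realTrace (hreal y hy (ofReal_im y))]

theorem image_realTrace (hreal : ∀ z ∈ U, (f z).im = 0 ↔ z.im = 0) :
    realTrace f '' (ofReal ⁻¹' U) = ofReal ⁻¹' (f '' U) := by
  ext t
  constructor
  · rintro ⟨x, hx, rfl⟩
    exact ⟨x, hx, (ofReal_realTrace ((hreal x hx).2 (ofReal_im x))).symm⟩
  · rintro ⟨z, hz, hzt⟩
    obtain ⟨x, rfl⟩ : ∃ x : ℝ, (x : ℂ) = z :=
      ⟨z.re, Complex.ext rfl ((hreal z hz).1 (by rw [hzt, ofReal_im])).symm⟩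
    exact ⟨x, hz, by rw [realTrace, hzt, ofReal_re]⟩

theorem preimage_ofReal_ball_zero (r : ℝ) : ofReal ⁻¹' ball 0 r = Ioo (-r) r := by
  ext x
  simp [abs_lt]

theorem strictMonoOn_Ioo_of_injOn_of_deriv_pos {f : ℝ → ℝ} {a b x : ℝ}
    (hf : ContinuousOn f (Ioo a b)) (hinj : InjOn f (Ioo a b)) (hx : x ∈ Ioo a b)
    (hderiv : 0 < deriv f x) : StrictMonoOn f (Ioo a b) := by
  refine (hf.strictMonoOn_of_injOn_Ioo (hx.1.trans hx.2) hinj).resolve_right fun hanti => ?_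
  have hnonpos : derivWithin f (Ioo a b) x ≤ 0 := hanti.antitoneOn.derivWithin_nonpos
  rw [derivWithin_of_isOpen isOpen_Ioo hx] at hnonpos
  exact hderiv.not_ge hnonpos

theorem strictMonoOn_realTrace {r : ℝ} (hr : 0 < r) (hf : DifferentiableOn ℂ f (ball 0 r))
    (hinj : InjOn f (ball 0 r)) (hreal : ∀ z ∈ ball 0 r, z.im = 0 → (f z).im = 0)
    (hderiv : 0 < (deriv f 0).re) : StrictMonoOn (realTrace f) (Ioo (-r) r) := by
  have hf0 : DifferentiableAt ℂ f ((0 : ℝ) : ℂ) :=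
    hf.differentiableAt (by simpa using ball_mem_nhds 0 hr)
  have hderiv0 : 0 < deriv (realTrace f) 0 := by rwa [deriv_realTrace hf0, ofReal_zero]
  exact strictMonoOn_Ioo_of_injOn_of_deriv_pos
    (preimage_ofReal_ball_zero r ▸ continuousOn_realTrace hf.continuousOn)
    (preimage_ofReal_ball_zero r ▸ injOn_realTrace hinj hreal) ⟨neg_neg_of_pos hr, hr⟩ hderiv0

end RealTrace

section MonotoneImage

variable {α β : Type*} [LinearOrder α] [LinearOrder β] {f : α → β} {a b x : α} {a' b' : β}

theorem image_Ioo_left_of_strictMonoOn (hf : StrictMonoOn f (Ioo a b))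
    (himage : f '' Ioo a b = Ioo a' b') (hx : x ∈ Ioo a b) : f '' Ioo a x = Ioo a' (f x) := by
  ext y
  constructor
  · rintro ⟨t, ht, rfl⟩
    have htab : t ∈ Ioo a b := ⟨ht.1, ht.2.trans hx.2⟩
    exact ⟨(himage ▸ mem_image_of_mem f htab : f t ∈ Ioo a' b').1, hf htab hx ht.2⟩
  · intro hy
    have hfx : f x ∈ Ioo a' b' := himage ▸ mem_image_of_mem f hx
    obtain ⟨t, ht, rfl⟩ : y ∈ f '' Ioo a b := himage ▸ ⟨hy.1, hy.2.trans hfx.2⟩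
    exact ⟨t, ⟨ht.1, (hf.lt_iff_lt ht hx).1 hy.2⟩, rfl⟩

theorem image_Ioo_right_of_strictMonoOn (hf : StrictMonoOn f (Ioo a b))
    (himage : f '' Ioo a b = Ioo a' b') (hx : x ∈ Ioo a b) : f '' Ioo x b = Ioo (f x) b' := by
  ext y
  constructor
  · rintro ⟨t, ht, rfl⟩
    have htab : t ∈ Ioo a b := ⟨hx.1.trans ht.1, ht.2⟩
    exact ⟨hf hx htab ht.1, (himage ▸ mem_image_of_mem f htab : f t ∈ Ioo a' b').2⟩
  · intro hy
    have hfx : f x ∈ Ioo a' b' := himage ▸ mem_image_of_mem f hx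
    obtain ⟨t, ht, rfl⟩ : y ∈ f '' Ioo a b := himage ▸ ⟨hfx.1.trans hy.1, hy.2⟩
    exact ⟨t, ⟨(hf.lt_iff_lt hx ht).1 hy.1, ht.2⟩, rfl⟩

end MonotoneImage

theorem eq_or_eq_conj_of_norm_eq_of_re_eq {z w : ℂ} (hnorm : ‖z‖ = ‖w‖) (hre : z.re = w.re) :
    z = w ∨ z = conj w := by
  have him : normSq z = normSq w := by rw [normSq_eq_norm_sq, normSq_eq_norm_sq, hnorm]
  rw [normSq_apply, normSq_apply, hre, add_right_inj] at him
  exact (mul_self_eq_mul_self_iff.1 him).imp (Complex.ext hre) (Complex.ext hre)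

theorem exists_norm_eq_of_isPreconnected {E : Type*} [SeminormedAddCommGroup E] {s : Set E}
    (hs : IsPreconnected s) (h0 : 0 ∈ s) {r : ℝ} (hr : 0 ≤ r) (hball : ¬ s ⊆ ball 0 r) :
    ∃ x ∈ s, ‖x‖ = r := by
  obtain ⟨y, hy, hyr⟩ := not_subset.1 hball
  refine hs.intermediate_value h0 hy continuous_norm.continuousOn ⟨by rwa [norm_zero], ?_⟩
  rwa [mem_ball_zero_iff, not_lt] at hyr

namespace SymmetricDomain

variable {Ω : Set ℂ}

theorem mem_of_norm_mem (hΩ : SymmetricDomain Ω) {z : ℂ} (hnorm : (‖z‖ : ℂ) ∈ Ω) : z ∈ Ω := by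
  by_contra hz
  have hz0 : 0 < ‖z‖ := norm_pos_iff.2 fun h => hz (h ▸ hΩ.1)
  rcases hΩ.2.2 ‖z‖ hz0 with hempty | ⟨-, -, x, hx, hxs⟩
  · exact absurd ⟨mem_sphere_zero_iff_norm.2 rfl, hz⟩ (eq_empty_iff_forall_notMem.1 hempty z)
  · have hxz : x = ‖z‖ := by
      simpa [abs_of_pos hx] using hxs.1
    exact hxs.2 (hxz ▸ hnorm)

theorem isPreconnected_sphere_diff (hΩ : SymmetricDomain Ω) {r : ℝ} (hr : 0 < r) :
    IsPreconnected (sphere 0 r \ Ω) := by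
  rcases hΩ.2.2 r hr with hempty | ⟨-, hconn, -⟩
  · exact hempty ▸ isPreconnected_empty
  · exact hconn.isPreconnected

theorem mem_of_norm_eq_of_re_le (hΩ : SymmetricDomain Ω) {z w : ℂ} (hz : z ∈ Ω)
    (hnorm : ‖w‖ = ‖z‖) (hre : w.re ≤ z.re) : w ∈ Ω := by
  by_contra hw
  have hz0 : 0 < ‖z‖ := hnorm ▸ norm_pos_iff.2 fun h => hw (h ▸ hΩ.1)
  have hnotMem : (‖z‖ : ℂ) ∉ Ω := hnorm ▸ mt hΩ.mem_of_norm_mem hw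
  obtain ⟨v, ⟨hv, hvΩ⟩, hvz⟩ : z.re ∈ re '' (sphere 0 ‖z‖ \ Ω) :=
    (hΩ.isPreconnected_sphere_diff hz0).intermediate_value
      (show w ∈ _ from ⟨mem_sphere_zero_iff_norm.2 hnorm, hw⟩)
      (show (‖z‖ : ℂ) ∈ _ from ⟨by simp, hnotMem⟩)
      continuous_re.continuousOn ⟨hre, re_le_norm z⟩
  rcases eq_or_eq_conj_of_norm_eq_of_re_eq (mem_sphere_zero_iff_norm.1 hv) hvz with rfl | rfl
  · exact hvΩ hz
  · exact hvΩ ((hΩ.2.1 z).1 hz)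

theorem neg_norm_mem (hΩ : SymmetricDomain Ω) {z : ℂ} (hz : z ∈ Ω) : (-‖z‖ : ℂ) ∈ Ω :=
  hΩ.mem_of_norm_eq_of_re_le hz (by simp) (by simpa using neg_le_of_abs_le (abs_re_le_norm z))

theorem notMem_of_isGreatest_ball_subset (hΩ : SymmetricDomain Ω) (hopen : IsOpen Ω) {μ : ℝ}
    (hμ : IsGreatest {t : ℝ | 0 < t ∧ ball 0 t ⊆ Ω} μ) : (μ : ℂ) ∉ Ω := by
  intro hmem
  obtain ⟨ε, hε, hball⟩ := Metric.isOpen_iff.1 hopen _ hmem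
  have hlarger : ball 0 (μ + ε) ⊆ Ω := by
    intro z hz
    rcases lt_or_ge ‖z‖ μ with hlt | hge
    · exact hμ.1.2 (mem_ball_zero_iff.2 hlt)
    · refine hΩ.mem_of_norm_mem (hball ?_)
      rw [mem_ball, isometry_ofReal.dist_eq, Real.dist_eq, abs_of_nonneg (sub_nonneg.2 hge)]
      linarith [mem_ball_zero_iff.1 hz]
  linarith [hμ.2 ⟨add_pos hμ.1.1 hε, hlarger⟩]

theorem ofReal_mem_of_neg (hΩ : SymmetricDomain Ω) (hpre : IsPreconnected Ω) {M : ℝ}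
    (hM : IsLeast {t : ℝ | 0 < t ∧ Ω ⊆ ball 0 t} M) {t : ℝ} (hMt : -M < t) (ht : t < 0) :
    (t : ℂ) ∈ Ω := by
  have hball : ¬ Ω ⊆ ball 0 (-t) := fun hsub => by linarith [hM.2 ⟨neg_pos.2 ht, hsub⟩]
  obtain ⟨z, hz, hzt⟩ :=
    exists_norm_eq_of_isPreconnected hpre hΩ.1 (neg_nonneg.2 ht.le) hball
  simpa [hzt] using hΩ.neg_norm_mem hz

theorem preimage_ofReal_eq_Ioo (hΩ : SymmetricDomain Ω) (hopen : IsOpen Ω)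
    (hpre : IsPreconnected Ω) (hord : (ofReal ⁻¹' Ω).OrdConnected) {μ M : ℝ}
    (hμ : IsGreatest {t : ℝ | 0 < t ∧ ball 0 t ⊆ Ω} μ)
    (hM : IsLeast {t : ℝ | 0 < t ∧ Ω ⊆ ball 0 t} M) :
    ofReal ⁻¹' Ω = Ioo (-M) μ := by
  refine Subset.antisymm (fun t ht => ⟨?_, ?_⟩) fun t ht => ?_
  · have htM : t ∈ Ioo (-M) M := preimage_ofReal_ball_zero M ▸ hM.1.2 ht
    exact htM.1
  · refine lt_of_not_ge fun hμt => hΩ.notMem_of_isGreatest_ball_subset hopen hμ ?_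
    exact hord.out (show (0 : ℝ) ∈ _ from hΩ.1) ht ⟨hμ.1.1.le, hμt⟩
  · rcases lt_or_ge t 0 with hneg | hnonneg
    · exact hΩ.ofReal_mem_of_neg hpre hM ht.1 hneg
    · exact hμ.1.2 (by simpa [abs_of_nonneg hnonneg] using ht.2)

theorem image_realTrace_Ioo (hΩ : SymmetricDomain Ω) (hopen : IsOpen Ω) {μ M r : ℝ}
    (hμ : IsGreatest {t : ℝ | 0 < t ∧ ball 0 t ⊆ Ω} μ)
    (hM : IsLeast {t : ℝ | 0 < t ∧ Ω ⊆ ball 0 t} M) {f : ℂ → ℂ}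
    (hf : ContinuousOn f (ball 0 r)) (himage : f '' ball 0 r = Ω)
    (hreal : ∀ z ∈ ball 0 r, (f z).im = 0 ↔ z.im = 0) :
    realTrace f '' Ioo (-r) r = Ioo (-M) μ := by
  have htrace : realTrace f '' Ioo (-r) r = ofReal ⁻¹' Ω := by
    rw [← preimage_ofReal_ball_zero, image_realTrace hreal, himage]
  have hcont : ContinuousOn (realTrace f) (Ioo (-r) r) :=
    preimage_ofReal_ball_zero r ▸ continuousOn_realTrace hf
  have hpre : IsPreconnected Ω := himage ▸ (convex_ball 0 r).isPreconnected.image f hf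
  have hord : (ofReal ⁻¹' Ω).OrdConnected :=
    htrace ▸ (isPreconnected_Ioo.image _ hcont).ordConnected
  exact htrace.trans (hΩ.preimage_ofReal_eq_Ioo hopen hpre hord hμ hM)

end SymmetricDomain

theorem stmt5 (Ω : Set ℂ) (μ M : ℝ)
    (hbdd : Bornology.IsBounded Ω) (hopen : IsOpen Ω)
    (hsc : SimplyConnectedSpace Ω) (hsymm : SymmetricDomain Ω)
    (hμ : IsGreatest {t : ℝ | 0 < t ∧ ball (0:ℂ) t ⊆ Ω} μ)
    (hM : IsLeast {t : ℝ | 0 < t ∧ Ω ⊆ ball (0:ℂ) t} M)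
    (Φ : ℂ → ℂ)
    (hΦhol : DifferentiableOn ℂ Φ (ball (0:ℂ) 1))
    (hΦbij : Set.BijOn Φ (ball (0:ℂ) 1) Ω)
    (hΦ0 : Φ 0 = 0)
    (hΦ' : ∃ c : ℝ, 0 < c ∧ deriv Φ 0 = (c : ℂ)) :
    (∀ z ∈ ball (0:ℂ) 1, Φ ((starRingEnd ℂ) z) = (starRingEnd ℂ) (Φ z)) ∧
    (∀ z ∈ ball (0:ℂ) 1, ((Φ z).im = 0 ↔ z.im = 0)) ∧
    Φ '' ((fun x : ℝ => (x:ℂ)) '' Set.Ioo (-1 : ℝ) 0) = (fun x : ℝ => (x:ℂ)) '' Set.Ioo (-M) 0 ∧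
    Φ '' ((fun x : ℝ => (x:ℂ)) '' Set.Ioo (0 : ℝ) 1) = (fun x : ℝ => (x:ℂ)) '' Set.Ioo 0 μ := by
  obtain ⟨c, hc, hΦ'⟩ := hΦ'
  have hconj : ∀ z ∈ ball (0 : ℂ) 1, Φ (conj z) = conj (Φ z) := fun z hz =>
    map_conj_of_injOn_ball (map_zero _) hΦhol hΦbij.injOn
      (hΦbij.image_eq ▸ fun w => (hsymm.2.1 w).1) (by simp [hΦ0]) (by simp [hΦ']) hz
  have hreal : ∀ z ∈ ball (0 : ℂ) 1, (Φ z).im = 0 ↔ z.im = 0 := fun z hz =>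
    im_eq_zero_iff_of_map_conj (fun w hw => by simpa using hw) hΦbij.injOn hconj hz
  have hmono : StrictMonoOn (realTrace Φ) (Ioo (-1) 1) :=
    strictMonoOn_realTrace one_pos hΦhol hΦbij.injOn (fun z hz => (hreal z hz).2)
      (by rwa [hΦ', ofReal_re])
  have himage : realTrace Φ '' Ioo (-1) 1 = Ioo (-M) μ :=
    hsymm.image_realTrace_Ioo hopen hμ hM hΦhol.continuousOn hΦbij.image_eq hreal
  have htrace0 : realTrace Φ 0 = 0 := by simp [realTrace, hΦ0]
  have him : ∀ x ∈ Ioo (-1 : ℝ) 1, (Φ x).im = 0 := fun x hx =>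
    (hreal x (by rwa [← preimage_ofReal_ball_zero] at hx)).2 (ofReal_im x)
  have h0 : (0 : ℝ) ∈ Ioo (-1) 1 := by simp
  refine ⟨hconj, hreal, ?_, ?_⟩
  · rw [image_image_ofReal fun x hx => him x (Ioo_subset_Ioo_right zero_le_one hx),
      image_Ioo_left_of_strictMonoOn hmono himage h0, htrace0]
  · rw [image_image_ofReal fun x hx => him x (Ioo_subset_Ioo_left (by simp) hx),
      image_Ioo_right_of_strictMonoOn hmono himage h0, htrace0]
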